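/- Let n ≥ 1 and let K ⊂ ℝⁿ be a convex body containing the origin in its interior with G_K = G_{K°} = 0. Then F_K is twice differentiable at (0,0) and its Hessian at (0,0) is given by the quadratic form Hess_{(0,0)}F_K[(v,η),(v,η)] = (n+1)·vp(K)·[ (n+2)·vᵗ cov(K°) v + (n+2)·ηᵗ cov(K) η − 2⟨v,η⟩ ] for all (v,η) ∈ ℝⁿ × ℝⁿ; equivalently, in block form the Hessian matrix equals (n+1)·vp(K) times the 2n×2n block matrix with diagonal blocks (n+2)·cov(K°) and (n+2)·cov(K) and off-diagonal blocks −I_n. -/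

import Mathlib

open MeasureTheory RealInnerProductSpace

noncomputable section

/-- The polar body `K° = {y | ⟨x, y⟩ ≤ 1 for all x ∈ K}`. -/
def polarBody {n : ℕ} (K : Set (EuclideanSpace ℝ (Fin n))) : Set (EuclideanSpace ℝ (Fin n)) :=
  {y | ∀ x ∈ K, ⟪x, y⟫ ≤ 1}

/-- The volume product `vp(K) = |K| · |K°|`. -/
def vp {n : ℕ} (K : Set (EuclideanSpace ℝ (Fin n))) : ℝ :=
  (volume K).toReal * (volume (polarBody K)).toReal

/-- The barycenter `G_A = |A|⁻¹ ∫_A x dx`. -/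
def bary {n : ℕ} (A : Set (EuclideanSpace ℝ (Fin n))) : EuclideanSpace ℝ (Fin n) :=
  (volume A).toReal⁻¹ • ∫ x in A, x

/-- The covariance matrix `cov(K)_{ij} = |K|⁻¹ ∫_K x_i x_j dx`. -/
def covM {n : ℕ} (K : Set (EuclideanSpace ℝ (Fin n))) : Matrix (Fin n) (Fin n) ℝ :=
  Matrix.of fun i j => (volume K).toReal⁻¹ * ∫ x in K, x i * x j

/-- The functional `F_K(x, ξ) = vp((K° + ξ)° + x)`. -/
def FK {n : ℕ} (K : Set (EuclideanSpace ℝ (Fin n)))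
    (p : EuclideanSpace ℝ (Fin n) × EuclideanSpace ℝ (Fin n)) : ℝ :=
  vp ((fun y => y + p.1) '' polarBody ((fun y => y + p.2) '' polarBody K))


lemma polar_closed {n : ℕ} (A : Set (EuclideanSpace ℝ (Fin n))) : IsClosed (polarBody A) := by
  have : polarBody A = ⋂ x ∈ A, {y | ⟪x, y⟫ ≤ 1} := by
    ext y; simp [polarBody]
  rw [this]
  refine isClosed_biInter fun x _ => isClosed_le (by fun_prop) (by fun_prop)

lemma polar_convex {n : ℕ} (A : Set (EuclideanSpace ℝ (Fin n))) : Convex ℝ (polarBody A) := by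
  intro y hy z hz a b ha hb hab x hx
  have h1 := hy x hx
  have h2 := hz x hx
  rw [inner_add_right, inner_smul_right, inner_smul_right]
  nlinarith

lemma polar_zero {n : ℕ} (A : Set (EuclideanSpace ℝ (Fin n))) : 0 ∈ polarBody A := by
  intro x _
  simp

lemma polar_bdd {n : ℕ} {A : Set (EuclideanSpace ℝ (Fin n))} (h : 0 ∈ interior A) :
    Bornology.IsBounded (polarBody A) := by
  rw [mem_interior_iff_mem_nhds, Metric.nhds_basis_closedBall.mem_iff] at h
  obtain ⟨r, hr, hA⟩ := h
  refine (Metric.isBounded_closedBall (x := (0 : EuclideanSpace ℝ (Fin n))) (r := 1 / r)).subset ?_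
  intro y hy
  rw [mem_closedBall_zero_iff]
  by_cases h0 : y = 0
  · subst h0; simp; positivity
  have hn : 0 < ‖y‖ := norm_pos_iff.2 h0
  have := hy ((r / ‖y‖) • y) (hA (by
    rw [mem_closedBall_zero_iff, norm_smul, Real.norm_eq_abs, abs_of_pos (by positivity)]
    field_simp; rfl))
  rw [real_inner_smul_left, real_inner_self_eq_norm_sq] at this
  rw [le_div_iff₀ hr]
  calc ‖y‖ * r = r / ‖y‖ * ‖y‖ ^ 2 := by field_simp
    _ ≤ 1 := this

lemma polar_compact {n : ℕ} {A : Set (EuclideanSpace ℝ (Fin n))} (h : 0 ∈ interior A) :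
    IsCompact (polarBody A) :=
  Metric.isCompact_of_isClosed_isBounded (polar_closed A) (polar_bdd h)

lemma polar_int {n : ℕ} {A : Set (EuclideanSpace ℝ (Fin n))} (h : Bornology.IsBounded A) :
    0 ∈ interior (polarBody A) := by
  obtain ⟨R, hR, hA⟩ := h.exists_pos_norm_le
  rw [mem_interior_iff_mem_nhds]
  refine Filter.mem_of_superset (Metric.ball_mem_nhds 0 (inv_pos.2 hR)) ?_
  intro y hy x hx
  rw [mem_ball_zero_iff] at hy
  calc ⟪x, y⟫ ≤ ‖x‖ * ‖y‖ := real_inner_le_norm _ _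
    _ ≤ R * R⁻¹ := by gcongr; exact hA x hx
    _ = 1 := by field_simp

lemma bipolar {n : ℕ} {C : Set (EuclideanSpace ℝ (Fin n))} (hc : IsClosed C) (hv : Convex ℝ C)
    (h0 : 0 ∈ C) : polarBody (polarBody C) = C := by
  apply Set.Subset.antisymm
  · intro y hy
    by_contra hyC
    obtain ⟨f, u, h1, h2⟩ := geometric_hahn_banach_closed_point hv hc hyC
    have hu : 0 < u := by simpa using h1 0 h0
    obtain ⟨w, rfl⟩ := (InnerProductSpace.toDual ℝ (EuclideanSpace ℝ (Fin n))).surjective f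
    simp only [InnerProductSpace.toDual_apply_apply] at h1 h2
    have := hy (u⁻¹ • w) (by
      intro a ha
      rw [real_inner_smul_right, real_inner_comm, inv_mul_le_iff₀ hu, mul_one]
      exact (h1 a ha).le)
    rw [real_inner_smul_left, inv_mul_le_iff₀ hu, mul_one] at this
    linarith
  · intro y hy x hx
    rw [real_inner_comm]
    exact hx y hy

lemma polar_translate {n : ℕ} {A : Set (EuclideanSpace ℝ (Fin n))} (hA : 0 ∈ interior A)
    (ξ : EuclideanSpace ℝ (Fin n)) (hξ : ∀ z ∈ polarBody A, 0 < 1 + ⟪ξ, z⟫) :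
    polarBody ((fun y => y + ξ) '' A) = (fun z => (1 + ⟪ξ, z⟫)⁻¹ • z) '' polarBody A := by
  ext y
  constructor
  · intro hy
    have hy' : ∀ a ∈ A, ⟪a, y⟫ + ⟪ξ, y⟫ ≤ 1 := by
      intro a ha
      rw [← inner_add_left]
      exact hy _ ⟨a, ha, rfl⟩
    have h1 : ⟪ξ, y⟫ ≤ 1 := by simpa using hy' 0 (interior_subset hA)
    have h2 : ⟪ξ, y⟫ < 1 := by
      refine lt_of_le_of_ne h1 fun he => ?_
      rw [mem_interior_iff_mem_nhds, Metric.nhds_basis_closedBall.mem_iff] at hA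
      obtain ⟨r, hr, hA⟩ := hA
      have hy0 : y ≠ 0 := by rintro rfl; simp at he
      have hn : 0 < ‖y‖ := norm_pos_iff.2 hy0
      have := hy' ((r / ‖y‖) • y) (hA (by
        rw [mem_closedBall_zero_iff, norm_smul, Real.norm_eq_abs, abs_of_pos (by positivity)]
        field_simp; rfl))
      rw [real_inner_smul_left, real_inner_self_eq_norm_sq, he] at this
      have : 0 < r / ‖y‖ * ‖y‖ ^ 2 := by positivity
      linarith
    have h3 : 0 < 1 - ⟪ξ, y⟫ := by linarith
    refine ⟨(1 - ⟪ξ, y⟫)⁻¹ • y, ?_, ?_⟩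
    · intro a ha
      rw [real_inner_smul_right, inv_mul_le_iff₀ h3]
      linarith [hy' a ha]
    · simp only [real_inner_smul_right, smul_smul]
      have : (1 + (1 - ⟪ξ, y⟫)⁻¹ * ⟪ξ, y⟫)⁻¹ * (1 - ⟪ξ, y⟫)⁻¹ = 1 := by
        rw [← mul_inv, add_mul, mul_right_comm, inv_mul_cancel₀ h3.ne']
        simp
      rw [this, one_smul]
  · rintro ⟨z, hz, rfl⟩ _ ⟨a, ha, rfl⟩
    have := hξ z hz
    simp only [real_inner_smul_right, inner_add_left]
    rw [← mul_add, inv_mul_le_iff₀ this]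
    linarith [hz a ha]

lemma vol_polar_translate {n : ℕ} {A : Set (EuclideanSpace ℝ (Fin n))} (hA : 0 ∈ interior A)
    (ξ : EuclideanSpace ℝ (Fin n)) (hξ : ∀ z ∈ polarBody A, 0 < 1 + ⟪ξ, z⟫) :
    (volume (polarBody ((fun y => y + ξ) '' A))).toReal
      = ∫ z in polarBody A, ((1 + ⟪ξ, z⟫)⁻¹) ^ (n + 1) := by
  rw [polar_translate hA ξ hξ]
  let T' : EuclideanSpace ℝ (Fin n) → EuclideanSpace ℝ (Fin n) →L[ℝ] EuclideanSpace ℝ (Fin n) :=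
    fun z => (1 + ⟪ξ, z⟫)⁻¹ • (ContinuousLinearMap.id ℝ _ +
      (-(1 + ⟪ξ, z⟫)⁻¹ • innerSL ℝ ξ).smulRight z)
  have hT' : ∀ z ∈ polarBody A, HasFDerivWithinAt (fun z => (1 + ⟪ξ, z⟫)⁻¹ • z) (T' z)
      (polarBody A) z := by
    intro z hz
    have hs := hξ z hz
    have h1 : HasFDerivAt (fun z : EuclideanSpace ℝ (Fin n) => 1 + ⟪ξ, z⟫) (innerSL ℝ ξ) z :=
      ((innerSL ℝ ξ).hasFDerivAt).const_add 1
    have h2 := (hasDerivAt_inv hs.ne').comp_hasFDerivAt z h1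
    have h3 := h2.smul (hasFDerivAt_id z)
    refine (h3.congr_fderiv ?_).hasFDerivWithinAt
    ext1 w
    simp [T', smul_smul, smul_add]
    congr 1
    field_simp
  have hinj : Set.InjOn (fun z => (1 + ⟪ξ, z⟫)⁻¹ • z) (polarBody A) := by
    intro z hz w hw h
    have hz' := hξ z hz
    have hw' := hξ w hw
    simp only at h
    have h1 := congrArg (fun t => ⟪ξ, t⟫) h
    simp only [real_inner_smul_right] at h1
    have h2 : ⟪ξ, z⟫ = ⟪ξ, w⟫ := by
      field_simp at h1
      linarith
    rw [h2] at h
    exact smul_right_injective _ (inv_ne_zero hw'.ne') h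
  have hdet : ∀ z ∈ polarBody A, |(T' z).det| = ((1 + ⟪ξ, z⟫)⁻¹) ^ (n + 1) := by
    intro z hz
    have hs := hξ z hz
    have : ((T' z : EuclideanSpace ℝ (Fin n) →L[ℝ] EuclideanSpace ℝ (Fin n)) :
        EuclideanSpace ℝ (Fin n) →ₗ[ℝ] EuclideanSpace ℝ (Fin n)) = (1 + ⟪ξ, z⟫)⁻¹ •
        LinearMap.transvection ((-(1 + ⟪ξ, z⟫)⁻¹ • innerSL ℝ ξ :
          EuclideanSpace ℝ (Fin n) →L[ℝ] ℝ) : EuclideanSpace ℝ (Fin n) →ₗ[ℝ] ℝ) z := by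
      ext1 w
      simp [T', LinearMap.transvection.apply]
    have h4 : (T' z).det = ((1 + ⟪ξ, z⟫)⁻¹) ^ (n + 1) := by
      rw [ContinuousLinearMap.det, this, LinearMap.det_smul, LinearMap.transvection.det]
      simp only [finrank_euclideanSpace, Fintype.card_fin, pow_succ]
      congr 1
      simp
      field_simp
      ring
    rw [h4, abs_of_pos (by positivity)]
  have := integral_image_eq_integral_abs_det_fderiv_smul volume (polar_closed A).measurableSet
    hT' hinj (fun _ => (1 : ℝ))
  simp only [integral_const, smul_eq_mul, mul_one, MeasurableSet.univ, measureReal_restrict_apply,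
    Set.univ_inter] at this
  rw [← measureReal_def, this]
  exact setIntegral_congr_fun (polar_closed A).measurableSet hdet

lemma param_int {P E G : Type*} [NormedAddCommGroup P] [NormedSpace ℝ P] [ProperSpace P]
    [NormedAddCommGroup E] [MeasurableSpace E] [BorelSpace E] {μ : Measure E}
    [IsFiniteMeasureOnCompacts μ] [SecondCountableTopology E]
    [NormedAddCommGroup G] [NormedSpace ℝ G] {S : Set E} (hS : IsCompact S)
    {U : Set P} (hU : IsOpen U) {φ : P → E → G} {φ' : P → E → P →L[ℝ] G}
    (hφ : ContinuousOn (fun q : P × E => φ q.1 q.2) (U ×ˢ S))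
    (hφ' : ContinuousOn (fun q : P × E => φ' q.1 q.2) (U ×ˢ S))
    (hd : ∀ p ∈ U, ∀ z ∈ S, HasFDerivAt (fun p => φ p z) (φ' p z) p) (p : P) (hp : p ∈ U) :
    IntegrableOn (φ p) S μ ∧ IntegrableOn (φ' p) S μ ∧
    HasFDerivAt (fun p => ∫ z in S, φ p z ∂μ) (∫ z in S, φ' p z ∂μ) p := by
  obtain ⟨r, hr, hrU⟩ := Metric.nhds_basis_closedBall.mem_iff.1 (hU.mem_nhds hp)
  have c1 : ∀ q ∈ U, ContinuousOn (φ q) S := fun q hq =>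
    hφ.comp (f := fun z => (q, z)) (by fun_prop) (fun z hz => ⟨hq, hz⟩)
  have c2 : ∀ q ∈ U, ContinuousOn (φ' q) S := fun q hq =>
    hφ'.comp (f := fun z => (q, z)) (by fun_prop) (fun z hz => ⟨hq, hz⟩)
  obtain ⟨C, hC⟩ := ((isCompact_closedBall p r).prod hS).exists_bound_of_continuousOn
    (hφ'.mono (Set.prod_mono hrU le_rfl))
  have i1 := (c1 p hp).integrableOn_compact (μ := μ) hS
  have i2 := (c2 p hp).integrableOn_compact (μ := μ) hS
  refine ⟨i1, i2, ?_⟩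
  have hfin : IsFiniteMeasure (μ.restrict S) := ⟨by simpa using hS.measure_lt_top⟩
  refine hasFDerivAt_integral_of_dominated_of_fderiv_le (bound := fun _ => C)
    (Metric.closedBall_mem_nhds p hr) ?_ i1 i2.aestronglyMeasurable ?_ (integrable_const C) ?_
  · filter_upwards [hU.mem_nhds hp] with q hq
    exact ((c1 q hq).integrableOn_compact (μ := μ) hS).aestronglyMeasurable
  · refine (ae_restrict_iff' hS.measurableSet).2 (ae_of_all _ fun z hz q hq => ?_)
    exact hC (q, z) ⟨hq, hz⟩
  · refine (ae_restrict_iff' hS.measurableSet).2 (ae_of_all _ fun z hz q hq => ?_)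
    exact hd q (hrU hq) z hz

lemma hasDerivAt_inv_pow' (m : ℕ) {t : ℝ} (ht : t ≠ 0) :
    HasDerivAt (fun t : ℝ => (t⁻¹) ^ m) (-(m : ℝ) * (t⁻¹) ^ (m + 1)) t := by
  refine ((hasDerivAt_inv ht).pow m).congr_deriv ?_
  cases m with
  | zero => simp
  | succ k => simp; ring

set_option maxSynthPendingDepth 5 in
lemma param2 {P E : Type*} [NormedAddCommGroup P] [NormedSpace ℝ P] [ProperSpace P]
    [NormedAddCommGroup E] [MeasurableSpace E] [BorelSpace E] {μ : Measure E}
    [IsFiniteMeasureOnCompacts μ] [SecondCountableTopology E]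
    {S : Set E} (hS : IsCompact S) (m : ℕ)
    {s : P → E → ℝ} {s' : P → E → P →L[ℝ] ℝ} {s'' : P →L[ℝ] P →L[ℝ] ℝ}
    (hs : Continuous (fun q : P × E => s q.1 q.2))
    (hs' : Continuous (fun q : P × E => s' q.1 q.2))
    (hd : ∀ p z, HasFDerivAt (fun p => s p z) (s' p z) p)
    (hd' : ∀ p z, HasFDerivAt (fun p => s' p z) s'' p)
    (h1 : ∀ z, s 0 z = 1) :
    ∃ (I' : P → P →L[ℝ] ℝ) (I'' : P →L[ℝ] P →L[ℝ] ℝ),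
      (∀ᶠ p in nhds (0 : P), HasFDerivAt (fun p => ∫ z in S, ((s p z)⁻¹) ^ m ∂μ) (I' p) p) ∧
      HasFDerivAt I' I'' 0 ∧
      (∀ w, I' 0 w = -(m : ℝ) * ∫ z in S, s' 0 z w ∂μ) ∧
      (∀ w, I'' w w = (m : ℝ) * (m + 1) * (∫ z in S, (s' 0 z w) ^ 2 ∂μ)
        - m * μ.real S * s'' w w) := by
  have hpos : ∀ᶠ p in nhds (0 : P), ∀ z ∈ S, 0 < s p z := by
    refine hS.eventually_forall_of_forall_eventually fun z _ => ?_
    exact hs.continuousAt.eventually_const_lt (by simp [h1])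
  obtain ⟨U, hUs, hU, h0⟩ := mem_nhds_iff.1 hpos
  have hUs' : ∀ p ∈ U, ∀ z ∈ S, s p z ≠ 0 := fun p hp z hz => (hUs hp z hz).ne'
  have ci : ContinuousOn (fun q : P × E => (s q.1 q.2)⁻¹) (U ×ˢ S) :=
    hs.continuousOn.inv₀ fun q hq => hUs' _ hq.1 _ hq.2
  let φ : P → E → ℝ := fun p z => ((s p z)⁻¹) ^ m
  let φ' : P → E → P →L[ℝ] ℝ := fun p z => (-(m : ℝ) * ((s p z)⁻¹) ^ (m + 1)) • s' p z
  let φ'' : P → E → P →L[ℝ] P →L[ℝ] ℝ := fun p z =>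
    (-(m : ℝ) * ((s p z)⁻¹) ^ (m + 1)) • s'' +
      ((-(m : ℝ) * (-((m + 1 : ℕ) : ℝ) * ((s p z)⁻¹) ^ (m + 1 + 1))) • s' p z).smulRight (s' p z)
  have c0 : ContinuousOn (fun q : P × E => φ q.1 q.2) (U ×ˢ S) := ci.pow m
  have c1 : ContinuousOn (fun q : P × E => φ' q.1 q.2) (U ×ˢ S) :=
    (continuousOn_const.mul (ci.pow (m + 1))).smul hs'.continuousOn
  have c2 : ContinuousOn (fun q : P × E => φ'' q.1 q.2) (U ×ˢ S) := by
    have k1 : ContinuousOn (fun q : P × E => -(m : ℝ) * ((s q.1 q.2)⁻¹) ^ (m + 1)) (U ×ˢ S) :=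
      continuousOn_const.mul (ci.pow (m + 1))
    have k2 : ContinuousOn (fun q : P × E => -(m : ℝ) * (-((m + 1 : ℕ) : ℝ) *
        ((s q.1 q.2)⁻¹) ^ (m + 1 + 1))) (U ×ˢ S) :=
      continuousOn_const.mul (continuousOn_const.mul (ci.pow (m + 1 + 1)))
    have e : Continuous fun q : (P →L[ℝ] ℝ) × (P →L[ℝ] ℝ) => q.1.smulRight q.2 :=
      (ContinuousLinearMap.smulRightL ℝ P (P →L[ℝ] ℝ)).continuous₂
    have a1 : ContinuousOn (fun q : P × E => (-(m : ℝ) * ((s q.1 q.2)⁻¹) ^ (m + 1)) • s'')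
        (U ×ˢ S) := k1.smul continuousOn_const
    have a2 : ContinuousOn (fun q : P × E => ((-(m : ℝ) * (-((m + 1 : ℕ) : ℝ) *
        ((s q.1 q.2)⁻¹) ^ (m + 1 + 1))) • s' q.1 q.2).smulRight (s' q.1 q.2)) (U ×ˢ S) :=
      e.comp_continuousOn ((k2.smul hs'.continuousOn).prodMk hs'.continuousOn)
    exact a1.add a2
  have d0 : ∀ p ∈ U, ∀ z ∈ S, HasFDerivAt (fun p => φ p z) (φ' p z) p := by
    intro p hp z hz
    have := (hasDerivAt_inv_pow' m (hUs' p hp z hz)).comp_hasFDerivAt p (hd p z)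
    exact this
  have d1 : ∀ p ∈ U, ∀ z ∈ S, HasFDerivAt (fun p => φ' p z) (φ'' p z) p := by
    intro p hp z hz
    have := (((hasDerivAt_inv_pow' (m + 1) (hUs' p hp z hz)).const_mul
      (-(m : ℝ))).comp_hasFDerivAt p (hd p z)).smul (hd' p z)
    exact this
  have r0 := param_int (μ := μ) hS hU c0 c1 d0
  have r1 := param_int (μ := μ) hS hU c1 c2 d1
  refine ⟨fun p => ∫ z in S, φ' p z ∂μ, ∫ z in S, φ'' 0 z ∂μ, ?_, (r1 0 h0).2.2, ?_, ?_⟩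
  · filter_upwards [hU.mem_nhds h0] with p hp using (r0 p hp).2.2
  · intro w
    rw [ContinuousLinearMap.integral_apply (r0 0 h0).2.1]
    simp only [φ', h1]
    simp [integral_const_mul, integral_neg]
  · intro w
    have i2 := (r1 0 h0).2.1
    rw [ContinuousLinearMap.integral_apply i2,
      ContinuousLinearMap.integral_apply (i2.apply_continuousLinearMap w)]
    have e : ∀ z, φ'' 0 z w w = (m : ℝ) * (m + 1) * (s' 0 z w) ^ 2 - m * s'' w w := by
      intro z
      simp [φ'', h1]
      ring
    simp only [e]
    have hc : Continuous fun z => (s' 0 z w) ^ 2 := by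
      have : Continuous fun z => s' 0 z := hs'.comp (by fun_prop : Continuous fun z : E => ((0 : P), z))
      fun_prop
    have hfin : IsFiniteMeasure (μ.restrict S) := ⟨by simpa using hS.measure_lt_top⟩
    rw [integral_sub ((hc.continuousOn.integrableOn_compact hS).const_mul _) (integrable_const _),
      integral_const_mul]
    simp
    ring

lemma FK_eq {n : ℕ} {K : Set (EuclideanSpace ℝ (Fin n))}
    (hKcomp : IsCompact K) (hKconv : Convex ℝ K)
    (hK0 : (0 : EuclideanSpace ℝ (Fin n)) ∈ interior K)
    (p : EuclideanSpace ℝ (Fin n) × EuclideanSpace ℝ (Fin n))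
    (h1 : -p.2 ∈ polarBody K) (h2 : ∀ z ∈ K, 0 < 1 + ⟪p.2, z⟫)
    (h3 : ∀ y ∈ polarBody K, 0 < 1 + ⟪p.1, y + p.2⟫) :
    FK K p = (∫ z in K, ((1 + ⟪p.2, z⟫)⁻¹) ^ (n + 1)) *
      ∫ y in polarBody K, ((1 + ⟪p.1, y + p.2⟫)⁻¹) ^ (n + 1) := by
  obtain ⟨x, ξ⟩ := p
  simp only at h1 h2 h3 ⊢
  have hKK : polarBody (polarBody K) = K :=
    bipolar hKcomp.isClosed hKconv (interior_subset hK0)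
  have hLc : IsCompact (polarBody K) := polar_compact hK0
  have hL0 : 0 ∈ interior (polarBody K) := polar_int hKcomp.isBounded
  have hNc : IsCompact ((fun y => y + ξ) '' polarBody K) := hLc.image (by fun_prop)
  have hNN : polarBody (polarBody ((fun y => y + ξ) '' polarBody K))
      = (fun y => y + ξ) '' polarBody K := by
    refine bipolar hNc.isClosed ?_ ⟨-ξ, h1, by simp⟩
    have := (polar_convex K).translate ξ
    simpa [add_comm] using this
  have hM0 : 0 ∈ interior (polarBody ((fun y => y + ξ) '' polarBody K)) :=
    polar_int hNc.isBounded
  unfold FK vp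
  simp only
  congr 1
  · have e := vol_polar_translate hL0 ξ (by rw [hKK]; exact h2)
    rw [hKK] at e
    rw [← e]
    congr 1
    rw [Set.image_add_right, measure_preimage_add_right]
  · have e := vol_polar_translate hM0 x (by
      rw [hNN]
      rintro _ ⟨y, hy, rfl⟩
      exact h3 y hy)
    rw [hNN] at e
    rw [e]
    exact (measurePreserving_add_right volume ξ).setIntegral_image_emb
      (measurableEmbedding_addRight ξ) _ _

lemma quad_cov {n : ℕ} {S : Set (EuclideanSpace ℝ (Fin n))} (hS : IsCompact S)
    (hv : volume.real S ≠ 0) (v : EuclideanSpace ℝ (Fin n)) :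
    ∫ z in S, ⟪z, v⟫ ^ 2 = volume.real S * ∑ i, ∑ j, v i * covM S i j * v j := by
  have e : ∀ z : EuclideanSpace ℝ (Fin n), ⟪z, v⟫ ^ 2 = ∑ i, ∑ j, v i * v j * (z i * z j) := by
    intro z
    rw [PiLp.inner_apply, sq, Finset.sum_mul_sum]
    refine Finset.sum_congr rfl fun i _ => Finset.sum_congr rfl fun j _ => ?_
    simp
    ring
  have hi : ∀ i j : Fin n, IntegrableOn (fun z : EuclideanSpace ℝ (Fin n) =>
      v i * v j * (z i * z j)) S := fun i j =>
    (Continuous.continuousOn (by fun_prop)).integrableOn_compact hS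
  simp only [e]
  rw [integral_finsetSum _ fun i _ => integrable_finsetSum _ fun j _ => hi i j, Finset.mul_sum]
  refine Finset.sum_congr rfl fun i _ => ?_
  rw [integral_finsetSum _ fun j _ => hi i j, Finset.mul_sum]
  refine Finset.sum_congr rfl fun j _ => ?_
  rw [integral_const_mul, covM, Matrix.of_apply, ← measureReal_def]
  field_simp

lemma bary_inner {n : ℕ} {S : Set (EuclideanSpace ℝ (Fin n))} (hS : IsCompact S)
    (hv : volume.real S ≠ 0) (hb : bary S = 0) (v : EuclideanSpace ℝ (Fin n)) :
    ∫ z in S, ⟪z, v⟫ = 0 := by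
  rw [bary, ← measureReal_def, smul_eq_zero] at hb
  have h0 := hb.resolve_left (inv_ne_zero hv)
  have hi : IntegrableOn (fun z : EuclideanSpace ℝ (Fin n) => z) S :=
    continuousOn_id.integrableOn_compact hS
  have := integral_inner (𝕜 := ℝ) hi v
  simp only [real_inner_comm] at this ⊢
  rw [h0] at this
  simpa [real_inner_comm] using this

lemma vol_ne {n : ℕ} {S : Set (EuclideanSpace ℝ (Fin n))} (hS : IsCompact S)
    (h0 : 0 ∈ interior S) : volume.real S ≠ 0 := by
  rw [measureReal_def, ENNReal.toReal_ne_zero]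
  exact ⟨(Measure.measure_pos_of_nonempty_interior _ ⟨0, h0⟩).ne', hS.measure_lt_top.ne⟩

lemma paramA {n : ℕ} {S : Set (EuclideanSpace ℝ (Fin n))} (hS : IsCompact S)
    (hv : volume.real S ≠ 0) (hb : bary S = 0) (m : ℕ) :
    ∃ (I' : EuclideanSpace ℝ (Fin n) × EuclideanSpace ℝ (Fin n) →
        EuclideanSpace ℝ (Fin n) × EuclideanSpace ℝ (Fin n) →L[ℝ] ℝ)
      (I'' : EuclideanSpace ℝ (Fin n) × EuclideanSpace ℝ (Fin n) →L[ℝ]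
        EuclideanSpace ℝ (Fin n) × EuclideanSpace ℝ (Fin n) →L[ℝ] ℝ),
      (∀ᶠ p in nhds 0, HasFDerivAt
        (fun p : EuclideanSpace ℝ (Fin n) × EuclideanSpace ℝ (Fin n) =>
          ∫ z in S, ((1 + ⟪p.2, z⟫)⁻¹) ^ m) (I' p) p) ∧
      HasFDerivAt I' I'' 0 ∧ I' 0 = 0 ∧
      (∀ w, I'' w w = (m : ℝ) * (m + 1) *
        (volume.real S * ∑ i, ∑ j, w.2 i * covM S i j * w.2 j)) := by
  obtain ⟨I', I'', a1, a2, a3, a4⟩ := param2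
    (P := EuclideanSpace ℝ (Fin n) × EuclideanSpace ℝ (Fin n)) (μ := volume) hS m
    (s := fun p z => 1 + ⟪p.2, z⟫)
    (s' := fun p z => (innerSL ℝ z).comp (ContinuousLinearMap.snd ℝ _ _)) (s'' := 0)
    (by fun_prop) (by fun_prop)
    (by
      intro p z
      have := (((innerSL ℝ z).comp (ContinuousLinearMap.snd ℝ (EuclideanSpace ℝ (Fin n))
        (EuclideanSpace ℝ (Fin n)))).hasFDerivAt (x := p)).const_add 1
      refine this.congr_of_eventuallyEq (Filter.Eventually.of_forall fun q => ?_)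
      simp [real_inner_comm])
    (fun p z => hasFDerivAt_const _ _) (by simp)
  refine ⟨I', I'', a1, a2, ?_, ?_⟩
  · refine ContinuousLinearMap.ext fun w => ?_
    rw [a3]
    simp [bary_inner hS hv hb]
  · intro w
    rw [a4]
    simp [quad_cov hS hv]

lemma paramB {n : ℕ} {S : Set (EuclideanSpace ℝ (Fin n))} (hS : IsCompact S)
    (hv : volume.real S ≠ 0) (hb : bary S = 0) (m : ℕ) :
    ∃ (I' : EuclideanSpace ℝ (Fin n) × EuclideanSpace ℝ (Fin n) →
        EuclideanSpace ℝ (Fin n) × EuclideanSpace ℝ (Fin n) →L[ℝ] ℝ)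
      (I'' : EuclideanSpace ℝ (Fin n) × EuclideanSpace ℝ (Fin n) →L[ℝ]
        EuclideanSpace ℝ (Fin n) × EuclideanSpace ℝ (Fin n) →L[ℝ] ℝ),
      (∀ᶠ p in nhds 0, HasFDerivAt
        (fun p : EuclideanSpace ℝ (Fin n) × EuclideanSpace ℝ (Fin n) =>
          ∫ z in S, ((1 + ⟪p.1, z + p.2⟫)⁻¹) ^ m) (I' p) p) ∧
      HasFDerivAt I' I'' 0 ∧ I' 0 = 0 ∧
      (∀ w, I'' w w = (m : ℝ) * (m + 1) *
        (volume.real S * ∑ i, ∑ j, w.1 i * covM S i j * w.1 j)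
        - m * volume.real S * (2 * ⟪w.1, w.2⟫)) := by
  let E := EuclideanSpace ℝ (Fin n)
  let ip : E →L[ℝ] E →L[ℝ] ℝ := innerSL ℝ
  let s2 : E × E →L[ℝ] E × E →L[ℝ] ℝ :=
    ip.bilinearComp (ContinuousLinearMap.snd ℝ E E) (ContinuousLinearMap.fst ℝ E E) +
    ip.bilinearComp (ContinuousLinearMap.fst ℝ E E) (ContinuousLinearMap.snd ℝ E E)
  have hs2 : ∀ p w : E × E, s2 p w = ⟪p.2, w.1⟫ + ⟪p.1, w.2⟫ := fun p w => rfl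
  obtain ⟨I', I'', a1, a2, a3, a4⟩ := param2
    (P := E × E) (μ := volume) hS m
    (s := fun p z => 1 + ⟪p.1, z + p.2⟫)
    (s' := fun p z => (innerSL ℝ z).comp (ContinuousLinearMap.fst ℝ E E) + s2 p) (s'' := s2)
    (by fun_prop) (by fun_prop)
    (by
      intro p z
      have h1 : HasFDerivAt (fun q : E × E => q.1) (ContinuousLinearMap.fst ℝ E E) p :=
        hasFDerivAt_fst
      have h2 : HasFDerivAt (fun q : E × E => z + q.2) (ContinuousLinearMap.snd ℝ E E) p :=
        hasFDerivAt_snd.const_add z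
      refine ((h1.inner ℝ h2).const_add 1).congr_fderiv ?_
      refine ContinuousLinearMap.ext fun w => ?_
      simp only [ContinuousLinearMap.add_apply, hs2]
      simp [fderivInnerCLM_apply, inner_add_left, inner_add_right]
      rw [real_inner_comm z, real_inner_comm p.2]
      ring)
    (fun p z => (s2.hasFDerivAt).const_add _) (by simp)
  refine ⟨I', I'', a1, a2, ?_, ?_⟩
  · refine ContinuousLinearMap.ext fun w => ?_
    rw [a3]
    simp [bary_inner hS hv hb]
  · intro w
    rw [a4, hs2]
    simp [quad_cov hS hv]
    left
    rw [real_inner_comm w.1]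
    ring

theorem stmt3 {n : ℕ} (hn : 1 ≤ n) (K : Set (EuclideanSpace ℝ (Fin n)))
    (hKcomp : IsCompact K) (hKconv : Convex ℝ K)
    (hK0 : (0 : EuclideanSpace ℝ (Fin n)) ∈ interior K)
    (hbK : bary K = 0) (hbKpolar : bary (polarBody K) = 0) :
    ∃ f' : EuclideanSpace ℝ (Fin n) × EuclideanSpace ℝ (Fin n) →
        (EuclideanSpace ℝ (Fin n) × EuclideanSpace ℝ (Fin n) →L[ℝ] ℝ),
      (∀ᶠ p in nhds ((0, 0) : EuclideanSpace ℝ (Fin n) × EuclideanSpace ℝ (Fin n)),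
        HasFDerivAt (FK K) (f' p) p) ∧
      ∃ f'' : EuclideanSpace ℝ (Fin n) × EuclideanSpace ℝ (Fin n) →L[ℝ]
          (EuclideanSpace ℝ (Fin n) × EuclideanSpace ℝ (Fin n) →L[ℝ] ℝ),
        HasFDerivAt f' f'' (0, 0) ∧
        ∀ v η : EuclideanSpace ℝ (Fin n),
          f'' (v, η) (v, η) =
            ((n : ℝ) + 1) * vp K *
              (((n : ℝ) + 2) * (∑ i, ∑ j, v i * covM (polarBody K) i j * v j)
                + ((n : ℝ) + 2) * (∑ i, ∑ j, η i * covM K i j * η j)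
                - 2 * ⟪v, η⟫) := by
  have hLc : IsCompact (polarBody K) := polar_compact hK0
  have hL0 : 0 ∈ interior (polarBody K) := polar_int hKcomp.isBounded
  have vK := vol_ne hKcomp hK0
  have vL := vol_ne hLc hL0
  obtain ⟨A', A'', a1, a2, a3, a4⟩ := paramA hKcomp vK hbK (n + 1)
  obtain ⟨B', B'', b1, b2, b3, b4⟩ := paramB hLc vL hbKpolar (n + 1)
  set FA := fun p : EuclideanSpace ℝ (Fin n) × EuclideanSpace ℝ (Fin n) =>
    ∫ z in K, ((1 + ⟪p.2, z⟫)⁻¹) ^ (n + 1) with hFA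
  set FB := fun p : EuclideanSpace ℝ (Fin n) × EuclideanSpace ℝ (Fin n) =>
    ∫ y in polarBody K, ((1 + ⟪p.1, y + p.2⟫)⁻¹) ^ (n + 1) with hFB
  have hF : ∀ᶠ p in nhds (0 : EuclideanSpace ℝ (Fin n) × EuclideanSpace ℝ (Fin n)),
      FK K p = FA p * FB p := by
    have e1 : ∀ᶠ p in nhds (0 : EuclideanSpace ℝ (Fin n) × EuclideanSpace ℝ (Fin n)),
        -p.2 ∈ polarBody K := by
      have hc : ContinuousAt (fun p : EuclideanSpace ℝ (Fin n) × EuclideanSpace ℝ (Fin n) =>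
        -p.2) 0 := by fun_prop
      refine hc.eventually_mem ?_
      simpa using mem_interior_iff_mem_nhds.1 hL0
    have e2 : ∀ᶠ p in nhds (0 : EuclideanSpace ℝ (Fin n) × EuclideanSpace ℝ (Fin n)),
        ∀ z ∈ K, 0 < 1 + ⟪p.2, z⟫ := by
      refine hKcomp.eventually_forall_of_forall_eventually fun z _ => ?_
      have hc : ContinuousAt (fun q : (EuclideanSpace ℝ (Fin n) × EuclideanSpace ℝ (Fin n)) ×
        EuclideanSpace ℝ (Fin n) => 1 + ⟪q.1.2, q.2⟫) (0, z) := by fun_prop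
      exact hc.eventually_const_lt (by simp)
    have e3 : ∀ᶠ p in nhds (0 : EuclideanSpace ℝ (Fin n) × EuclideanSpace ℝ (Fin n)),
        ∀ y ∈ polarBody K, 0 < 1 + ⟪p.1, y + p.2⟫ := by
      refine hLc.eventually_forall_of_forall_eventually fun z _ => ?_
      have hc : ContinuousAt (fun q : (EuclideanSpace ℝ (Fin n) × EuclideanSpace ℝ (Fin n)) ×
        EuclideanSpace ℝ (Fin n) => 1 + ⟪q.1.1, q.2 + q.1.2⟫) (0, z) := by fun_prop
      exact hc.eventually_const_lt (by simp)
    filter_upwards [e1, e2, e3] with p h1 h2 h3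
    exact FK_eq hKcomp hKconv hK0 p h1 h2 h3
  have hA0 : FA 0 = volume.real K := by simp [hFA]
  have hB0 : FB 0 = volume.real (polarBody K) := by simp [hFB]
  have dA := a1.self_of_nhds
  have dB := b1.self_of_nhds
  refine ⟨fun p => FA p • B' p + FB p • A' p, ?_, _, (dA.smul b2).add (dB.smul a2), ?_⟩
  · change ∀ᶠ p in nhds (0 : EuclideanSpace ℝ (Fin n) × EuclideanSpace ℝ (Fin n)), _
    filter_upwards [a1, b1, hF.eventually_nhds] with p h1 h2 h3
    exact (h1.mul h2).congr_of_eventuallyEq h3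
  · intro v η
    have ea := a4 (v, η)
    have eb := b4 (v, η)
    simp only at ea eb
    simp only [a3, b3, hA0, hB0, ContinuousLinearMap.add_apply, ContinuousLinearMap.smul_apply,
      ContinuousLinearMap.smulRight_apply, ContinuousLinearMap.zero_apply, ea, eb, smul_eq_mul,
      mul_zero, zero_smul, smul_zero]
    rw [vp, ← measureReal_def, ← measureReal_def]
    push_cast
    ring
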